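/- Let n ≥ 1 and let f_1, …, f_{n+1} : [-1,1] → ℝ be measurable functions that are bounded from below. Define f : S^n → ℝ by f(x) = ∑_{i=1}^{n+1} f_i(x_i). Then ∫_{S^n} e^{f} dσ_n ≤ ∏_{i=1}^{n+1} ( ∫_{[-1,1]} e^{2 f_i} dν_n )^{1/2}. -/

import Mathlib

open MeasureTheory Metric
open scoped ENNReal BigOperators

/-- The rotation-invariant (Haar) probability measure on the unit sphere
`S^n ⊂ ℝ^{n+1}`: the surface measure `volume.toSphere`, normalized to total mass `1`. -/
noncomputable def sphereHaar (n : ℕ) :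
    Measure (sphere (0 : EuclideanSpace ℝ (Fin (n + 1))) 1) :=
  ((volume : Measure (EuclideanSpace ℝ (Fin (n + 1)))).toSphere Set.univ)⁻¹ •
    (volume : Measure (EuclideanSpace ℝ (Fin (n + 1)))).toSphere

/-- The probability measure `ν_n` on `ℝ` with density
`t ↦ c_n · 1_{[-1,1]}(t) · (1 − t²)^{n/2 − 1}` with respect to Lebesgue measure,
where `c_n = Γ((n+1)/2)/(√π · Γ(n/2))` is the normalizing constant. -/
noncomputable def nuMeasure (n : ℕ) : Measure ℝ :=
  volume.withDensity fun t => ENNReal.ofReal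
    ((Real.Gamma (((n : ℝ) + 1) / 2) / (Real.sqrt Real.pi * Real.Gamma ((n : ℝ) / 2))) *
      Set.indicator (Set.Icc (-1 : ℝ) 1) (fun s => (1 - s ^ 2) ^ ((n : ℝ) / 2 - 1)) t)

/-!
Heat flow argument of Carlen, Lieb and Loss. Let each positive polynomial `u i` evolve under the
ultraspherical operator `L p = (1 - X²) p'' - n X p'`, the action of the Laplacian of the sphere
on functions of one coordinate. Since rotations preserve the measure, the fields
`x ↦ v - ⟪v, x⟫ x` can be integrated by parts. With `a i = (log (u i))' (x i)`, the derivative of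
`∫ ∏ i, √(u i (x i)) dσ` along the flow is therefore the integral against a positive weight of
`∑ i, (a i)² + (∑ i, x i * a i)² - 2 ∑ i, (x i)² (a i)²`, which is nonnegative on the sphere.
Hence the integral increases along the flow, while each `∫ u i dν` is constant and `u i` tends to
this constant. A polynomial is a finite sum of eigenfunctions of `L`, so its flow is explicit and
stays polynomial, and the change of time `s = exp (-t)` makes it polynomial in `s` as well, with
the equilibrium at `s = 0`. Density of polynomials in `L²(ν)` and Fatou's lemma give the
inequality for arbitrary `e ^ (2 f i)`.
-/

section PointwiseInequality

variable {ι : Type*} [Fintype ι]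

theorem two_mul_sum_sq_le_sq_sum_add_sq_sum_abs (y : ι → ℝ) :
    2 * ∑ i, y i ^ 2 ≤ (∑ i, y i) ^ 2 + (∑ i, |y i|) ^ 2 := by
  have hnonneg : ∀ i j, 0 ≤ y i * y j + |y i| * |y j| := fun i j => by
    rw [← abs_mul]
    linarith [neg_abs_le (y i * y j)]
  calc 2 * ∑ i, y i ^ 2 = ∑ i, (y i * y i + |y i| * |y i|) := by
        simp only [abs_mul_abs_self, ← two_mul, sq, Finset.mul_sum]
    _ ≤ ∑ i, ∑ j, (y i * y j + |y i| * |y j|) := by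
        gcongr with i
        exact Finset.single_le_sum (fun j _ => hnonneg i j) (Finset.mem_univ i)
    _ = (∑ i, y i) ^ 2 + (∑ i, |y i|) ^ 2 := by
        simp only [Finset.sum_add_distrib, sq, Finset.sum_mul_sum]

theorem two_mul_sum_sq_mul_sq_le {x : ι → ℝ} (hx : ∑ i, x i ^ 2 = 1) (a : ι → ℝ) :
    2 * ∑ i, x i ^ 2 * a i ^ 2 ≤ ∑ i, a i ^ 2 + (∑ i, x i * a i) ^ 2 := by
  have hcs : (∑ i, |x i * a i|) ^ 2 ≤ ∑ i, a i ^ 2 := by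
    simpa [abs_mul, hx] using
      Finset.sum_mul_sq_le_sq_mul_sq Finset.univ (fun i => |x i|) (fun i => |a i|)
  have := two_mul_sum_sq_le_sq_sum_add_sq_sum_abs fun i => x i * a i
  simp only [mul_pow] at this
  linarith

end PointwiseInequality

section CompactParametricIntegral

open Filter
open scoped Topology

variable {α : Type*} [TopologicalSpace α] [CompactSpace α] [MeasurableSpace α]
  [OpensMeasurableSpace α] {μ : Measure α} [IsFiniteMeasure μ]

theorem integrable_of_continuous_of_compactSpace {f : α → ℝ} (hf : Continuous f) :
    Integrable f μ :=
  hf.integrable_of_hasCompactSupport (HasCompactSupport.of_compactSpace f)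

theorem hasDerivAt_integral_of_continuousOn_uncurry {F F' : ℝ → α → ℝ} {s : Set ℝ} {t : ℝ}
    (hs : s ∈ 𝓝 t) (hF : ∀ r ∈ s, Continuous (F r))
    (hF' : ContinuousOn (Function.uncurry F') (s ×ˢ Set.univ))
    (hderiv : ∀ r ∈ s, ∀ x, HasDerivAt (F · x) (F' r x) r) :
    HasDerivAt (fun r => ∫ x, F r x ∂μ) (∫ x, F' t x ∂μ) t := by
  obtain ⟨K, hKt, hKs, hK⟩ := local_compact_nhds hs
  obtain ⟨C, hC⟩ := (hK.prod isCompact_univ).exists_bound_of_continuousOn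
    (hF'.mono (Set.prod_mono_left hKs))
  have hF't : Continuous (F' t) := hF'.comp_continuous (f := fun x => (t, x)) (by fun_prop)
    fun x => ⟨mem_of_mem_nhds hs, Set.mem_univ x⟩
  exact (hasDerivAt_integral_of_dominated_loc_of_deriv_le (bound := fun _ => C) hKt
    (eventually_of_mem hs fun r hr => (hF r hr).aestronglyMeasurable)
    (integrable_of_continuous_of_compactSpace (hF t (mem_of_mem_nhds hs)))
    hF't.aestronglyMeasurable
    (ae_of_all _ fun x r hr => hC (r, x) ⟨hr, Set.mem_univ x⟩) (integrable_const C)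
    (ae_of_all _ fun x r hr => hderiv r (hKs hr) x)).2

end CompactParametricIntegral

section OrthonormalBasis

open scoped InnerProductSpace

variable {E : Type*} [NormedAddCommGroup E] [InnerProductSpace ℝ E]

theorem sum_inner_mul_sub_inner_mul_orthonormalBasis {ι : Type*} [Fintype ι]
    (b : OrthonormalBasis ι ℝ E) (L : E →L[ℝ] ℝ) (c : ℝ) (x v : E) :
    ∑ j, (⟪b j, x⟫_ℝ * (⟪b j, x⟫_ℝ • L + c • innerSL ℝ (b j)) v -
        ⟪v, x⟫_ℝ * (⟪b j, x⟫_ℝ • L + c • innerSL ℝ (b j)) (b j)) =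
      ‖x‖ ^ 2 * L v - ⟪v, x⟫_ℝ * (L x + ((Fintype.card ι : ℝ) - 1) * c) := by
  have hinner (w : E) : ∑ j, ⟪b j, x⟫_ℝ * ⟪b j, w⟫_ℝ = ⟪w, x⟫_ℝ := by
    simpa [real_inner_comm] using b.sum_inner_mul_inner x w
  have hradial : ∑ j, ⟪b j, x⟫_ℝ * L (b j) = L x := by
    simpa using congrArg L (b.sum_repr' x)
  calc _ = (∑ j, ⟪b j, x⟫_ℝ * ⟪b j, x⟫_ℝ) * L v + (∑ j, ⟪b j, x⟫_ℝ * ⟪b j, v⟫_ℝ) * c -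
        ⟪v, x⟫_ℝ * (∑ j, ⟪b j, x⟫_ℝ * L (b j) + ∑ _j : ι, c) := by
        simp only [Finset.sum_mul, Finset.mul_sum, ← Finset.sum_add_distrib,
          ← Finset.sum_sub_distrib]
        refine Finset.sum_congr rfl fun j _ => ?_
        simp only [add_apply, smul_apply, smul_eq_mul, coe_innerSL_apply, b.inner_eq_one]
        ring
    _ = _ := by
        rw [hinner, hinner, hradial, real_inner_self_eq_norm_sq, Finset.sum_const,
          Finset.card_univ, nsmul_eq_mul]
        ring

end OrthonormalBasis

section SphereIntegrationByParts

open scoped InnerProductSpace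

variable {E : Type*} [NormedAddCommGroup E] [InnerProductSpace ℝ E] [FiniteDimensional ℝ E]
  [MeasurableSpace E] [BorelSpace E]

open scoped Pointwise in
theorem integral_toSphere_comp_linearIsometryEquiv (e : E ≃ₗᵢ[ℝ] E) (f : E → ℝ) :
    ∫ x : sphere (0 : E) 1, f (e x) ∂(volume : Measure E).toSphere =
      ∫ x : sphere (0 : E) 1, f x ∂(volume : Measure E).toSphere := by
  let φ : sphere (0 : E) 1 ≃ₜ sphere (0 : E) 1 :=
    e.toHomeomorph.subtype fun x => by simp
  suffices hφ : MeasurePreserving φ (volume : Measure E).toSphere (volume : Measure E).toSphere from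
    hφ.integral_comp φ.measurableEmbedding (fun x => f x)
  refine ⟨φ.measurable, Measure.ext fun s hs => ?_⟩
  rw [Measure.map_apply φ.measurable hs, Measure.toSphere_apply' _ (φ.measurable hs),
    Measure.toSphere_apply' _ hs]
  have hcone : Set.Ioo (0 : ℝ) 1 • ((↑) '' (φ ⁻¹' s) : Set E) =
      e ⁻¹' (Set.Ioo (0 : ℝ) 1 • ((↑) '' s)) := by
    have himage : ((↑) '' s : Set E) = e '' ((↑) '' (φ ⁻¹' s)) := by
      conv_lhs => rw [← φ.image_preimage s]
      rw [Set.image_image, Set.image_image]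
      rfl
    have hsmul : Set.Ioo (0 : ℝ) 1 • (e '' ((↑) '' (φ ⁻¹' s))) =
        e '' (Set.Ioo (0 : ℝ) 1 • ((↑) '' (φ ⁻¹' s))) :=
      (Set.image_image2_distrib_right fun r x => map_smul e r x).symm
    rw [himage, hsmul, Set.preimage_image_eq _ e.injective]
  rw [hcone]
  congr 1
  exact e.measurePreserving.measure_preimage_equiv (f := e.toMeasurableEquiv) _

theorem integral_toSphere_fderiv_skewAdjoint {A : E →L[ℝ] E} (hA : A ∈ skewAdjoint (E →L[ℝ] E))
    {f : E → ℝ} {f' : E → E →L[ℝ] ℝ} (hf : ∀ x ∈ sphere (0 : E) 1, HasFDerivAt f (f' x) x)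
    (hf' : ContinuousOn f' (sphere 0 1)) :
    ∫ x : sphere (0 : E) 1, f' x (A x) ∂(volume : Measure E).toSphere = 0 := by
  let _ : NormedAlgebra ℚ (E →L[ℝ] E) := NormedAlgebra.restrictScalars ℚ ℝ _
  let U : ℝ → E ≃ₗᵢ[ℝ] E := fun θ => Unitary.linearIsometryEquiv
    ⟨NormedSpace.exp (θ • A),
      NormedSpace.exp_mem_unitary_of_mem_skewAdjoint (skewAdjoint.smul_mem θ hA)⟩
  have hmem : ∀ θ (x : sphere (0 : E) 1), U θ x ∈ sphere (0 : E) 1 := fun θ x => by simp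
  have hU : ∀ θ (x : E), HasDerivAt (fun θ => U θ x) (A (U θ x)) θ := fun θ x =>
    ((hasDerivAt_exp_smul_const' A θ).clm_apply (hasDerivAt_const θ x)).congr_deriv <| by
      rw [map_zero, add_zero]
      rfl
  have hU0 : ∀ x : E, U 0 x = x := fun x => by
    change NormedSpace.exp ((0 : ℝ) • A) x = x
    simp
  have hUcont : Continuous fun p : ℝ × sphere (0 : E) 1 => U p.1 p.2 :=
    (NormedSpace.exp_continuous.comp (continuous_fst.smul continuous_const)).clm_apply
      (continuous_subtype_val.comp continuous_snd)
  have hfcont : ContinuousOn f (sphere 0 1) := fun x hx =>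
    (hf x hx).continuousAt.continuousWithinAt
  have hderiv := hasDerivAt_integral_of_continuousOn_uncurry
    (F := fun θ (x : sphere (0 : E) 1) => f (U θ x))
    (F' := fun θ (x : sphere (0 : E) 1) => f' (U θ x) (A (U θ x)))
    (μ := (volume : Measure E).toSphere) (t := 0) Filter.univ_mem
    (fun θ _ => hfcont.comp_continuous (hUcont.comp (by fun_prop : Continuous (θ, ·))) (hmem θ))
    (((hf'.comp_continuous hUcont fun p => hmem p.1 p.2).clm_apply
      (A.continuous.comp hUcont)).continuousOn)
    (fun θ _ x => (hf _ (hmem θ x)).comp_hasDerivAt θ (hU θ x))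
  simp only [integral_toSphere_comp_linearIsometryEquiv _ f] at hderiv
  simpa only [hU0] using hderiv.unique (hasDerivAt_const 0 _)

theorem integral_toSphere_fderiv_rankOne_sub {f : E → ℝ} {f' : E → E →L[ℝ] ℝ}
    (hf : ∀ x ∈ sphere (0 : E) 1, HasFDerivAt f (f' x) x) (hf' : ContinuousOn f' (sphere 0 1))
    (u v : E) :
    ∫ x : sphere (0 : E) 1, (⟪u, (x : E)⟫_ℝ * f' x v - ⟪v, (x : E)⟫_ℝ * f' x u)
      ∂(volume : Measure E).toSphere = 0 := by
  have hskew : InnerProductSpace.rankOne ℝ v u - InnerProductSpace.rankOne ℝ u v ∈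
      skewAdjoint (E →L[ℝ] E) := by
    rw [skewAdjoint.mem_iff, star_sub, ContinuousLinearMap.star_eq_adjoint,
      ContinuousLinearMap.star_eq_adjoint, InnerProductSpace.adjoint_rankOne,
      InnerProductSpace.adjoint_rankOne, neg_sub]
  simpa using integral_toSphere_fderiv_skewAdjoint hskew hf hf'

theorem integral_toSphere_fderiv_sub_inner_mul {f : E → ℝ} {f' : E → E →L[ℝ] ℝ}
    (hf : ∀ x ∈ sphere (0 : E) 1, HasFDerivAt f (f' x) x) (hf' : ContinuousOn f' (sphere 0 1))
    (v : E) :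
    ∫ x : sphere (0 : E) 1, (f' x v -
      ⟪v, (x : E)⟫_ℝ * (f' x x + ((Module.finrank ℝ E : ℝ) - 1) * f x))
      ∂(volume : Measure E).toSphere = 0 := by
  -- Sum over `j` the rotation identity in the plane of `b j` and `v` for `⟪b j, x⟫ * f x`.
  let b := stdOrthonormalBasis ℝ E
  have hfcont : ContinuousOn f (sphere 0 1) := fun x hx =>
    (hf x hx).continuousAt.continuousWithinAt
  have hbasis : ∀ j, ∫ x : sphere (0 : E) 1,
      (⟪b j, (x : E)⟫_ℝ * (⟪b j, (x : E)⟫_ℝ • f' x + f x • innerSL ℝ (b j)) v -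
        ⟪v, (x : E)⟫_ℝ * (⟪b j, (x : E)⟫_ℝ • f' x + f x • innerSL ℝ (b j)) (b j))
      ∂(volume : Measure E).toSphere = 0 := fun j =>
    integral_toSphere_fderiv_rankOne_sub (f := fun x => ⟪b j, x⟫_ℝ * f x)
      (fun x hx => ((innerSL ℝ (b j)).hasFDerivAt (x := x)).mul (hf x hx))
      (by fun_prop) (b j) v
  rw [← Finset.sum_eq_zero fun j (_ : j ∈ Finset.univ) => hbasis j,
    ← integral_finsetSum _ fun j _ => ?_]
  · refine integral_congr_ae (ae_of_all _ fun x => ?_)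
    simp only [sum_inner_mul_sub_inner_mul_orthonormalBasis, norm_eq_of_mem_sphere,
      one_pow, one_mul, Fintype.card_fin]
  · have hic : ∀ w, Continuous fun x : sphere (0 : E) 1 => ⟪w, (x : E)⟫_ℝ := fun w => by fun_prop
    have hfc : Continuous fun x : sphere (0 : E) 1 => f x := hfcont.domRestrict
    have hgc : ∀ w, Continuous fun x : sphere (0 : E) 1 =>
        (⟪b j, (x : E)⟫_ℝ • f' x + f x • innerSL ℝ (b j)) w := fun w =>
      (((hic _).smul hf'.domRestrict).add (hfc.smul continuous_const)).clm_apply continuous_const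
    exact integrable_of_continuous_of_compactSpace
      (((hic _).mul (hgc v)).sub ((hic v).mul (hgc _)))

end SphereIntegrationByParts

section Ultraspherical

open Polynomial

theorem mem_eigenspace_sup_iSup_of_sub_mem_iSup {K V ι : Type*} [Field K] [AddCommGroup V]
    [Module K V] {f : Module.End K V} {μ : K} {ν : ι → K} (hν : ∀ i, ν i ≠ μ) {v : V}
    (hv : (f - μ • 1) v ∈ ⨆ i, f.eigenspace (ν i)) :
    v ∈ f.eigenspace μ ⊔ ⨆ i, f.eigenspace (ν i) := by
  have hle : ⨆ i, f.eigenspace (ν i) ≤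
      (⨆ i, f.eigenspace (ν i)).map (f - μ • 1) := by
    refine iSup_le fun i w hw => ⟨(ν i - μ)⁻¹ • w,
      Submodule.smul_mem _ _ (Submodule.mem_iSup_of_mem i hw), ?_⟩
    have hne : ν i - μ ≠ 0 := sub_ne_zero.mpr (hν i)
    rw [map_smul, LinearMap.sub_apply, Module.End.mem_eigenspace_iff.mp hw, LinearMap.smul_apply,
      Module.End.one_apply, ← sub_smul, inv_smul_smul₀ hne]
  obtain ⟨w, hw, hwv⟩ := hle hv
  have hvw : v - w ∈ f.eigenspace μ := by
    rw [Module.End.eigenspace_def, LinearMap.mem_ker, map_sub, hwv, sub_self]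
  simpa using Submodule.add_mem_sup hvw hw

/-- The ultraspherical (Gegenbauer) operator `p ↦ (1 - X²) p'' - n X p'`. -/
noncomputable def ultrasphericalOp (n : ℕ) : Module.End ℝ ℝ[X] :=
  LinearMap.mulLeft ℝ (1 - X ^ 2) ∘ₗ derivative ∘ₗ derivative
    - LinearMap.mulLeft ℝ (C (n : ℝ) * X) ∘ₗ derivative

/-- The eigenvalues of `-ultrasphericalOp n`, as natural numbers. The subtraction truncates only
when `k = n = 0`. -/
def ultrasphericalEigenvalue (n k : ℕ) : ℕ := k * (k + n - 1)

theorem ultrasphericalOp_apply (n : ℕ) (p : ℝ[X]) : ultrasphericalOp n p =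
    (1 - X ^ 2) * derivative (derivative p) - C (n : ℝ) * X * derivative p := rfl

theorem eval_ultrasphericalOp (n : ℕ) (p : ℝ[X]) (x : ℝ) : (ultrasphericalOp n p).eval x =
    (1 - x ^ 2) * (derivative (derivative p)).eval x - n * x * (derivative p).eval x := by
  simp [ultrasphericalOp_apply]

theorem coeff_ultrasphericalOp (n : ℕ) (p : ℝ[X]) (m : ℕ) :
    (ultrasphericalOp n p).coeff m =
      (m + 2) * (m + 1) * p.coeff (m + 2) - ultrasphericalEigenvalue n m * p.coeff m := by
  have hshift : ultrasphericalOp n p = derivative (derivative p) -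
      derivative (derivative p) * X * X - C (n : ℝ) * (derivative p * X) := by
    rw [ultrasphericalOp_apply]
    ring
  rcases m with _ | _ | m <;>
    simp [hshift, coeff_derivative, ultrasphericalEigenvalue] <;> ring

theorem strictMono_ultrasphericalEigenvalue {n : ℕ} (hn : 1 ≤ n) :
    StrictMono (ultrasphericalEigenvalue n) := by
  intro k l hkl
  obtain ⟨n, rfl⟩ := Nat.exists_eq_add_of_le' hn
  exact Nat.mul_lt_mul'' hkl (by omega)

theorem degreeLT_le_iSup_eigenspace_ultrasphericalOp {n : ℕ} (hn : 1 ≤ n) (d : ℕ) :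
    degreeLT ℝ d ≤ ⨆ k : Set.Iio d,
      (ultrasphericalOp n).eigenspace (-(ultrasphericalEigenvalue n k : ℝ)) := by
  induction d with
  | zero =>
    intro p hp
    simp_all [mem_degreeLT]
  | succ d ih =>
    intro p hp
    have hlow : (ultrasphericalOp n - (-(ultrasphericalEigenvalue n d : ℝ)) • 1) p ∈
        degreeLT ℝ d := by
      rw [mem_degreeLT, degree_lt_iff_coeff_zero] at hp ⊢
      intro m hm
      rcases hm.eq_or_lt with rfl | hlt
      · simp [coeff_ultrasphericalOp, hp (d + 2) (by omega)]
      · simp [coeff_ultrasphericalOp, hp (m + 2) (by omega), hp m (by omega)]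
    have hsup : p ∈ _ ⊔ _ := mem_eigenspace_sup_iSup_of_sub_mem_iSup (fun k => by
      simpa using ((strictMono_ultrasphericalEigenvalue hn) k.2).ne) (ih hlow)
    refine SetLike.le_def.mp (sup_le ?_ (iSup_le fun k => ?_)) hsup
    · exact le_iSup_of_le ⟨d, Set.mem_Iio.mpr d.lt_succ_self⟩ le_rfl
    · exact le_iSup_of_le ⟨k, k.2.trans d.lt_succ_self⟩ le_rfl

theorem exists_ultrasphericalExpansion {n : ℕ} (hn : 1 ≤ n) (q : ℝ[X]) :
    ∃ P : ℕ →₀ ℝ[X],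
      (∀ k, P k ∈ (ultrasphericalOp n).eigenspace (-(ultrasphericalEigenvalue n k : ℝ))) ∧
        P.sum (fun _ p => p) = q := by
  rw [← Submodule.mem_iSup_iff_exists_finsupp]
  have hdeg : q ∈ degreeLT ℝ (q.natDegree + 1) :=
    mem_degreeLT.mpr (degree_le_natDegree.trans_lt (by exact_mod_cast q.natDegree.lt_succ_self))
  have hle : ⨆ k : Set.Iio (q.natDegree + 1),
      (ultrasphericalOp n).eigenspace (-(ultrasphericalEigenvalue n k : ℝ)) ≤
        ⨆ k, (ultrasphericalOp n).eigenspace (-(ultrasphericalEigenvalue n k : ℝ)) :=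
    iSup_le fun k => le_iSup_of_le (k : ℕ) le_rfl
  exact hle (degreeLT_le_iSup_eigenspace_ultrasphericalOp hn _ hdeg)

theorem eq_C_of_ultrasphericalOp_eq_zero {n : ℕ} (hn : 1 ≤ n) {p : ℝ[X]}
    (hp : ultrasphericalOp n p = 0) : ∃ c, p = C c := by
  refine ⟨p.coeff 0, eq_C_of_natDegree_eq_zero ?_⟩
  by_contra hdeg
  have hcoeff := coeff_ultrasphericalOp n p p.natDegree
  have hpos : (ultrasphericalEigenvalue n p.natDegree : ℝ) ≠ 0 := by
    have := strictMono_ultrasphericalEigenvalue hn (Nat.pos_of_ne_zero hdeg)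
    exact_mod_cast (Nat.zero_le _).trans_lt this |>.ne'
  rw [hp, coeff_eq_zero_of_natDegree_lt (n := p.natDegree + 2) (by omega)] at hcoeff
  simp_all

end Ultraspherical

section Minimum

theorem mul_sub_nonneg_of_isMinOn_of_convex {f : ℝ → ℝ} {f' x y : ℝ} {s : Set ℝ}
    (hs : Convex ℝ s) (hmin : IsMinOn f s x) (hf : HasDerivAt f f' x) (hx : x ∈ s) (hy : y ∈ s) :
    0 ≤ f' * (y - x) := by
  simpa [mul_comm] using hmin.localize.hasFDerivWithinAt_nonneg hf.hasFDerivAt.hasFDerivWithinAt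
    (sub_mem_posTangentConeAt_of_segment_subset (hs.segment_subset hx hy))

theorem deriv_deriv_nonneg_of_isLocalMin {f : ℝ → ℝ} {x : ℝ} (hmin : IsLocalMin f x)
    (hf : ContinuousAt f x) : 0 ≤ deriv (deriv f) x := by
  by_contra! hneg
  have hmax : IsLocalMax f x := isLocalMax_of_deriv_deriv_neg hneg hmin.deriv_eq_zero hf
  have hconst : f =ᶠ[nhds x] fun _ => f x :=
    hmin.mp (hmax.mono fun y hle hge => le_antisymm hle hge)
  simp [hconst.deriv.deriv_eq] at hneg

end Minimum

theorem eval_ultrasphericalOp_nonneg_of_isMinOn {n : ℕ} {p : Polynomial ℝ} {x : ℝ}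
    (hx : x ∈ Set.Icc (-1 : ℝ) 1) (hmin : IsMinOn (fun y => p.eval y) (Set.Icc (-1) 1) x) :
    0 ≤ (ultrasphericalOp n p).eval x := by
  have hfirst : 0 ≤ -(x * p.derivative.eval x) := by
    have hright := mul_sub_nonneg_of_isMinOn_of_convex (convex_Icc _ _) hmin (p.hasDerivAt x) hx
      (Set.right_mem_Icc.mpr (by norm_num))
    have hleft := mul_sub_nonneg_of_isMinOn_of_convex (convex_Icc _ _) hmin (p.hasDerivAt x) hx
      (Set.left_mem_Icc.mpr (by norm_num))
    linarith
  have hsecond : 0 ≤ (1 - x ^ 2) * p.derivative.derivative.eval x := by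
    by_cases hint : x ∈ Set.Ioo (-1 : ℝ) 1
    · have hderiv : deriv (fun y => p.eval y) = fun y => p.derivative.eval y :=
        funext fun _ => p.deriv
      have hmin' := deriv_deriv_nonneg_of_isLocalMin
        (hmin.isLocalMin (Icc_mem_nhds hint.1 hint.2)) p.continuousAt
      rw [hderiv, Polynomial.deriv] at hmin'
      exact mul_nonneg (by nlinarith [hx.1, hx.2]) hmin'
    · have hend : x = -1 ∨ x = 1 := by grind
      rcases hend with rfl | rfl <;> simp
  rw [eval_ultrasphericalOp]
  linarith [mul_nonneg n.cast_nonneg hfirst]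

section Flow

open Polynomial

/-- The ultraspherical semigroup applied to the polynomial `∑ k, P k`, where `P k` is meant to be
an eigenpolynomial for the `k`-th eigenvalue. In terms of the time `t`, the parameter is
`s = exp (-t)`: the flow starts at `s = 1` and reaches its equilibrium at `s = 0`. -/
noncomputable def ultrasphericalFlow (n : ℕ) (P : ℕ →₀ ℝ[X]) (s : ℝ) : ℝ[X] :=
  P.sum fun k p => s ^ ultrasphericalEigenvalue n k • p

variable {n : ℕ} {P : ℕ →₀ ℝ[X]}

theorem ultrasphericalFlow_one : ultrasphericalFlow n P 1 = P.sum fun _ p => p := by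
  simp [ultrasphericalFlow]

theorem ultrasphericalFlow_zero (hn : 1 ≤ n) : ultrasphericalFlow n P 0 = P 0 := by
  have hpos : ∀ k ≠ 0, ultrasphericalEigenvalue n k ≠ 0 := fun k hk =>
    ((Nat.zero_le _).trans_lt
      (strictMono_ultrasphericalEigenvalue hn (Nat.pos_of_ne_zero hk))).ne'
  rw [ultrasphericalFlow, Finsupp.sum_eq_single 0]
  · simp [ultrasphericalEigenvalue]
  · exact fun k _ hk => by simp [hpos k hk]
  · simp

theorem continuous_eval_ultrasphericalFlow :
    Continuous fun z : ℝ × ℝ => (ultrasphericalFlow n P z.1).eval z.2 := by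
  simp only [ultrasphericalFlow, Finsupp.sum, eval_finsetSum, eval_smul]
  fun_prop

theorem ultrasphericalOp_ultrasphericalFlow (s : ℝ) :
    ultrasphericalOp n (ultrasphericalFlow n P s) =
      ultrasphericalFlow n (P.mapRange (ultrasphericalOp n) (map_zero _)) s := by
  rw [ultrasphericalFlow, ultrasphericalFlow, Finsupp.sum_mapRange_index (by simp), map_finsuppSum]
  simp only [map_smul]

theorem hasDerivAt_eval_ultrasphericalFlow
    (hP : ∀ k, P k ∈ (ultrasphericalOp n).eigenspace (-(ultrasphericalEigenvalue n k : ℝ)))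
    {s : ℝ} (hs : s ≠ 0) (x : ℝ) :
    HasDerivAt (fun r => (ultrasphericalFlow n P r).eval x)
      (-(ultrasphericalOp n (ultrasphericalFlow n P s)).eval x / s) s := by
  have hsum := HasDerivAt.fun_sum fun k (_ : k ∈ P.support) =>
    (hasDerivAt_pow (ultrasphericalEigenvalue n k) s).mul_const ((P k).eval x)
  simp only [ultrasphericalFlow, Finsupp.sum, map_sum, map_smul, eval_finsetSum, eval_smul,
    Module.End.mem_eigenspace_iff.mp (hP _), smul_eq_mul]
  refine hsum.congr_deriv ?_
  rw [← Finset.sum_neg_distrib, Finset.sum_div]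
  refine Finset.sum_congr rfl fun k _ => ?_
  rcases Nat.eq_zero_or_pos (ultrasphericalEigenvalue n k) with h | h
  · simp [h]
  · rw [eq_div_iff hs, mul_right_comm, mul_assoc _ _ s, ← pow_succ, Nat.sub_add_cancel h]
    ring

-- A space-time minimum of `u(s, x) - δ s` lies on the initial slice `s = 1`: otherwise
-- `∂ₛ u ≥ δ > 0` there, against `s ∂ₛ u = -L u ≤ 0`.
theorem sub_le_eval_ultrasphericalFlow
    (hP : ∀ k, P k ∈ (ultrasphericalOp n).eigenspace (-(ultrasphericalEigenvalue n k : ℝ)))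
    {m : ℝ} (hm : ∀ x ∈ Set.Icc (-1 : ℝ) 1, m ≤ (P.sum fun _ p => p).eval x)
    {δ : ℝ} (hδ : 0 < δ) {s : ℝ} (hs : s ∈ Set.Ioc (0 : ℝ) 1) {x : ℝ}
    (hx : x ∈ Set.Icc (-1 : ℝ) 1) : m - δ ≤ (ultrasphericalFlow n P s).eval x := by
  obtain ⟨⟨s₀, x₀⟩, ⟨hs₀, hx₀⟩, hminOn⟩ :=
    (isCompact_Icc.prod isCompact_Icc).exists_isMinOn
      (f := fun z : ℝ × ℝ => (ultrasphericalFlow n P z.1).eval z.2 - δ * z.1)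
      ⟨(s, x), Set.mk_mem_prod (Set.left_mem_Icc.mpr hs.2) hx⟩
      (continuous_eval_ultrasphericalFlow.sub (by fun_prop)).continuousOn
  have hmin : ∀ r ∈ Set.Icc s 1, ∀ y ∈ Set.Icc (-1 : ℝ) 1,
      (ultrasphericalFlow n P s₀).eval x₀ - δ * s₀ ≤ (ultrasphericalFlow n P r).eval y - δ * r :=
    fun r hr y hy => hminOn (Set.mk_mem_prod hr hy)
  have hs₀pos : 0 < s₀ := hs.1.trans_le hs₀.1
  have hspace : 0 ≤ (ultrasphericalOp n (ultrasphericalFlow n P s₀)).eval x₀ :=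
    eval_ultrasphericalOp_nonneg_of_isMinOn hx₀ fun y hy => by
      simpa using hmin s₀ hs₀ y hy
  have htime := mul_sub_nonneg_of_isMinOn_of_convex (convex_Icc s 1)
    (isMinOn_iff.mpr fun r hr => hmin r hr x₀ hx₀)
    ((hasDerivAt_eval_ultrasphericalFlow hP hs₀pos.ne' x₀).sub ((hasDerivAt_id s₀).const_mul δ))
    hs₀ (Set.right_mem_Icc.mpr hs.2)
  have hs₀one : s₀ = 1 := by
    have := div_nonneg hspace hs₀pos.le
    rw [neg_div] at htime
    nlinarith [hs₀.2]
  subst hs₀one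
  have hinit := hm x₀ hx₀
  have hle := hmin s (Set.left_mem_Icc.mpr hs.2) x hx
  rw [ultrasphericalFlow_one] at hle
  nlinarith [hs.1]

theorem le_eval_ultrasphericalFlow
    (hP : ∀ k, P k ∈ (ultrasphericalOp n).eigenspace (-(ultrasphericalEigenvalue n k : ℝ)))
    {m : ℝ} (hm : ∀ x ∈ Set.Icc (-1 : ℝ) 1, m ≤ (P.sum fun _ p => p).eval x)
    {s : ℝ} (hs : s ∈ Set.Icc (0 : ℝ) 1) {x : ℝ} (hx : x ∈ Set.Icc (-1 : ℝ) 1) :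
    m ≤ (ultrasphericalFlow n P s).eval x := by
  have hIoc : ∀ r ∈ Set.Ioc (0 : ℝ) 1, m ≤ (ultrasphericalFlow n P r).eval x := fun r hr =>
    le_of_forall_sub_le fun δ hδ => sub_le_eval_ultrasphericalFlow hP hm hδ hr hx
  rw [← closure_Ioc zero_ne_one] at hs
  exact closure_minimal hIoc (isClosed_le continuous_const
    (continuous_eval_ultrasphericalFlow.comp (by fun_prop : Continuous fun r : ℝ => (r, x)))) hs

theorem eval_ultrasphericalFlow_pos
    (hP : ∀ k, P k ∈ (ultrasphericalOp n).eigenspace (-(ultrasphericalEigenvalue n k : ℝ)))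
    (hpos : ∀ x ∈ Set.Icc (-1 : ℝ) 1, 0 < (P.sum fun _ p => p).eval x)
    {s : ℝ} (hs : s ∈ Set.Icc (0 : ℝ) 1) {x : ℝ} (hx : x ∈ Set.Icc (-1 : ℝ) 1) :
    0 < (ultrasphericalFlow n P s).eval x := by
  obtain ⟨x₀, hx₀, hmin⟩ := isCompact_Icc.exists_isMinOn ⟨x, hx⟩ (P.sum fun _ p => p).continuousOn
  exact (hpos x₀ hx₀).trans_le (le_eval_ultrasphericalFlow hP (fun _ h => hmin h) hs hx)

end Flow

section SphereHaar

instance isProbabilityMeasure_sphereHaar (n : ℕ) : IsProbabilityMeasure (sphereHaar n) := by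
  refine ⟨?_⟩
  rw [sphereHaar, Measure.smul_apply, smul_eq_mul]
  exact ENNReal.inv_mul_cancel (Measure.measure_univ_ne_zero.mpr (Measure.toSphere_ne_zero _))
    (measure_ne_top _ _)

theorem sum_sq_coord_sphere {ι : Type*} [Fintype ι] (x : sphere (0 : EuclideanSpace ℝ ι) 1) :
    ∑ i, x.1 i ^ 2 = 1 := by
  rw [← EuclideanSpace.real_norm_sq_eq, norm_eq_of_mem_sphere, one_pow]

theorem coord_sphere_mem_Icc {ι : Type*} [Fintype ι] (x : sphere (0 : EuclideanSpace ℝ ι) 1)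
    (i : ι) : x.1 i ∈ Set.Icc (-1 : ℝ) 1 :=
  abs_le.mp ((PiLp.norm_apply_le x.1 i).trans_eq (norm_eq_of_mem_sphere x))

variable {n : ℕ}

theorem integral_sphereHaar_fderiv_single_sub_mul {f : EuclideanSpace ℝ (Fin (n + 1)) → ℝ}
    {f' : EuclideanSpace ℝ (Fin (n + 1)) → EuclideanSpace ℝ (Fin (n + 1)) →L[ℝ] ℝ}
    (hf : ∀ x ∈ sphere 0 1, HasFDerivAt f (f' x) x) (hf' : ContinuousOn f' (sphere 0 1))
    (k : Fin (n + 1)) :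
    ∫ x, (f' x (EuclideanSpace.single k 1) - x.1 k * (f' x x + n * f x)) ∂sphereHaar n = 0 := by
  rw [sphereHaar, integral_smul_measure]
  have := integral_toSphere_fderiv_sub_inner_mul hf hf' (EuclideanSpace.single k 1)
  simp only [finrank_euclideanSpace_fin, EuclideanSpace.inner_single_left, map_one, one_mul,
    Nat.cast_add, Nat.cast_one, add_sub_cancel_right] at this
  rw [this, smul_zero]

end SphereHaar

section Energy

variable {n : ℕ} {φ a b : Fin (n + 1) → ℝ → ℝ}

theorem continuous_comp_coord_sphere {ι : Type*} [Fintype ι] {g : ℝ → ℝ}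
    (hg : ContinuousOn g (Set.Icc (-1) 1)) (i : ι) :
    Continuous fun x : sphere (0 : EuclideanSpace ℝ ι) 1 => g (x.1 i) :=
  hg.comp_continuous (by fun_prop) fun x => coord_sphere_mem_Icc x i

theorem hasFDerivAt_exp_sum_mul (ha : ∀ k, ∀ t ∈ Set.Icc (-1 : ℝ) 1, HasDerivAt (φ k) (a k t) t)
    (hb : ∀ k, ∀ t ∈ Set.Icc (-1 : ℝ) 1, HasDerivAt (a k) (b k t) t) (k : Fin (n + 1))
    {x : EuclideanSpace ℝ (Fin (n + 1))} (hx : x ∈ sphere 0 1) :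
    HasFDerivAt (fun x : EuclideanSpace ℝ (Fin (n + 1)) => Real.exp (∑ j, φ j (x j)) * a k (x k))
      (Real.exp (∑ j, φ j (x j)) • (a k (x k) • ∑ j, a j (x j) • EuclideanSpace.proj (𝕜 := ℝ) j +
        b k (x k) • EuclideanSpace.proj (𝕜 := ℝ) k)) x := by
  have hmem := coord_sphere_mem_Icc ⟨x, hx⟩
  have hproj (j) : HasFDerivAt (fun x : EuclideanSpace ℝ (Fin (n + 1)) => x j)
      (EuclideanSpace.proj (𝕜 := ℝ) j) x :=
    (EuclideanSpace.proj j : EuclideanSpace ℝ (Fin (n + 1)) →L[ℝ] ℝ).hasFDerivAt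
  have hsum := HasFDerivAt.fun_sum (u := Finset.univ) fun j _ =>
    (ha j _ (hmem j)).comp_hasFDerivAt x (hproj j)
  refine (hsum.exp.mul ((hb k _ (hmem k)).comp_hasFDerivAt x (hproj k))).congr_fderiv ?_
  simp only [smul_add, smul_smul, Function.comp_apply, mul_comm, add_comm]

theorem integral_sphereHaar_exp_sum_mul_eq_zero
    (ha : ∀ k, ∀ t ∈ Set.Icc (-1 : ℝ) 1, HasDerivAt (φ k) (a k t) t)
    (hb : ∀ k, ∀ t ∈ Set.Icc (-1 : ℝ) 1, HasDerivAt (a k) (b k t) t)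
    (hbc : ∀ k, ContinuousOn (b k) (Set.Icc (-1) 1)) (k : Fin (n + 1)) :
    ∫ x, Real.exp (∑ j, φ j (x.1 j)) * (a k (x.1 k) ^ 2 + b k (x.1 k) -
      x.1 k * (a k (x.1 k) * ∑ j, x.1 j * a j (x.1 j) + x.1 k * b k (x.1 k) + n * a k (x.1 k)))
      ∂sphereHaar n = 0 := by
  have hcoord {g : ℝ → ℝ} (hg : ContinuousOn g (Set.Icc (-1) 1)) (k) :
      ContinuousOn (fun x : EuclideanSpace ℝ (Fin (n + 1)) => g (x k)) (sphere 0 1) :=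
    hg.comp (by fun_prop) fun x hx => coord_sphere_mem_Icc ⟨x, hx⟩ k
  have hφc (j) := hcoord (fun t ht => (ha j t ht).continuousAt.continuousWithinAt) j
  have hac (j) := hcoord (fun t ht => (hb j t ht).continuousAt.continuousWithinAt) j
  rw [← integral_sphereHaar_fderiv_single_sub_mul
    (fun x hx => hasFDerivAt_exp_sum_mul ha hb k hx) ?_ k]
  · congr! 2 with x
    simp only [mul_comm (a _ _), smul_add, add_apply, smul_apply, sum_apply, PiLp.proj_apply,
      PiLp.single_apply, smul_eq_mul, ite_mul, one_mul, zero_mul, Finset.sum_ite_eq',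
      Finset.mem_univ, if_true, mul_one]
    ring
  · have hweight := (continuousOn_finsetSum Finset.univ fun j _ => hφc j).rexp
    have hgrad := continuousOn_finsetSum Finset.univ fun j _ =>
      (hac j).smul (continuousOn_const (c := EuclideanSpace.proj (𝕜 := ℝ) j))
    exact hweight.smul (((hac k).smul hgrad).add ((hcoord (hbc k) k).smul continuousOn_const))

theorem sum_sq_add_sub_le {ι : Type*} [Fintype ι] {x : ι → ℝ} (hx : ∑ i, x i ^ 2 = 1) (a b : ι → ℝ)
    (c : ℝ) :
    ∑ k, (a k ^ 2 + b k - x k * (a k * ∑ j, x j * a j + x k * b k + c * a k)) ≤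
      ∑ k, ((1 - x k ^ 2) * (b k + 2 * a k ^ 2) - c * x k * a k) := by
  have hpointwise := two_mul_sum_sq_mul_sq_le hx a
  have hdiff : ∑ k, ((1 - x k ^ 2) * (b k + 2 * a k ^ 2) - c * x k * a k) -
      ∑ k, (a k ^ 2 + b k - x k * (a k * ∑ j, x j * a j + x k * b k + c * a k)) =
      ∑ k, a k ^ 2 + (∑ k, x k * a k) ^ 2 - 2 * ∑ k, x k ^ 2 * a k ^ 2 := by
    rw [sq (∑ k, x k * a k), Finset.sum_mul, Finset.mul_sum, ← Finset.sum_sub_distrib,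
      ← Finset.sum_add_distrib, ← Finset.sum_sub_distrib]
    exact Finset.sum_congr rfl fun k _ => by ring
  linarith

theorem integral_sphereHaar_exp_sum_mul_sum_nonneg
    (ha : ∀ k, ∀ t ∈ Set.Icc (-1 : ℝ) 1, HasDerivAt (φ k) (a k t) t)
    (hb : ∀ k, ∀ t ∈ Set.Icc (-1 : ℝ) 1, HasDerivAt (a k) (b k t) t)
    (hbc : ∀ k, ContinuousOn (b k) (Set.Icc (-1) 1)) :
    0 ≤ ∫ x, Real.exp (∑ j, φ j (x.1 j)) * ∑ k, ((1 - x.1 k ^ 2) * (b k (x.1 k) +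
      2 * a k (x.1 k) ^ 2) - n * x.1 k * a k (x.1 k)) ∂sphereHaar n := by
  have hrestrict {g : Fin (n + 1) → ℝ → ℝ} (hg : ∀ k, ContinuousOn (g k) (Set.Icc (-1) 1)) :
      ∃ G : Fin (n + 1) → C(sphere (0 : EuclideanSpace ℝ (Fin (n + 1))) 1, ℝ),
        ∀ k x, g k (x.1 k) = G k x :=
    ⟨fun k => ⟨_, continuous_comp_coord_sphere (hg k) k⟩, fun _ _ => rfl⟩
  obtain ⟨Φ, hΦ⟩ := hrestrict fun k t ht => (ha k t ht).continuousAt.continuousWithinAt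
  obtain ⟨A, hA⟩ := hrestrict fun k t ht => (hb k t ht).continuousAt.continuousWithinAt
  obtain ⟨B, hB⟩ := hrestrict hbc
  have hzero := integral_sphereHaar_exp_sum_mul_eq_zero ha hb hbc
  simp only [hΦ, hA, hB] at hzero ⊢
  rw [← Finset.sum_eq_zero fun k (_ : k ∈ Finset.univ) => hzero k, ← integral_finsetSum _
    fun k _ => integrable_of_continuous_of_compactSpace (by fun_prop)]
  refine integral_mono (integrable_of_continuous_of_compactSpace (by fun_prop))
    (integrable_of_continuous_of_compactSpace (by fun_prop)) fun x => ?_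
  simp only [← Finset.mul_sum]
  exact mul_le_mul_of_nonneg_left (sum_sq_add_sub_le (sum_sq_coord_sphere x) _ _ _)
    (Real.exp_pos _).le

open Polynomial in
theorem integral_sphereHaar_exp_sum_log_mul_sum_nonneg {Q : Fin (n + 1) → ℝ[X]}
    (hQ : ∀ k, ∀ t ∈ Set.Icc (-1 : ℝ) 1, 0 < (Q k).eval t) :
    0 ≤ ∫ x, Real.exp (∑ k, Real.log ((Q k).eval (x.1 k)) / 2) *
      ∑ k, (ultrasphericalOp n (Q k)).eval (x.1 k) / (2 * (Q k).eval (x.1 k)) ∂sphereHaar n := by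
  have ha : ∀ k, ∀ t ∈ Set.Icc (-1 : ℝ) 1, HasDerivAt (fun t => Real.log ((Q k).eval t) / 2)
      ((Q k).derivative.eval t / (2 * (Q k).eval t)) t := fun k t ht =>
    ((((Q k).hasDerivAt t).log (hQ k t ht).ne').div_const 2).congr_deriv (by field_simp)
  have hb : ∀ k, ∀ t ∈ Set.Icc (-1 : ℝ) 1, HasDerivAt
      (fun t => (Q k).derivative.eval t / (2 * (Q k).eval t))
      (((Q k).derivative.derivative.eval t * (Q k).eval t - (Q k).derivative.eval t ^ 2) /
        (2 * (Q k).eval t ^ 2)) t := fun k t ht => by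
    have hne := (hQ k t ht).ne'
    refine (((Q k).derivative.hasDerivAt t).div (((Q k).hasDerivAt t).const_mul 2)
      (by positivity)).congr_deriv ?_
    field_simp
  have hbc : ∀ k, ContinuousOn (fun t => ((Q k).derivative.derivative.eval t * (Q k).eval t -
      (Q k).derivative.eval t ^ 2) / (2 * (Q k).eval t ^ 2)) (Set.Icc (-1) 1) := fun k =>
    ContinuousOn.div (by fun_prop) (by fun_prop) fun t ht => by
      have := hQ k t ht
      positivity
  refine (integral_sphereHaar_exp_sum_mul_sum_nonneg ha hb hbc).trans_eq ?_
  congr! 4 with x k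
  have hne := (hQ k _ (coord_sphere_mem_Icc x k)).ne'
  rw [eval_ultrasphericalOp]
  field_simp
  ring

end Energy

section Monotonicity

open Polynomial

variable {n : ℕ} {P : Fin (n + 1) → ℕ →₀ ℝ[X]}

theorem continuousOn_exp_sum_log_ultrasphericalFlow
    (hpos : ∀ i, ∀ s ∈ Set.Icc (0 : ℝ) 1, ∀ t ∈ Set.Icc (-1 : ℝ) 1,
      0 < (ultrasphericalFlow n (P i) s).eval t) :
    ContinuousOn (fun z : ℝ × sphere (0 : EuclideanSpace ℝ (Fin (n + 1))) 1 =>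
        Real.exp (∑ i, Real.log ((ultrasphericalFlow n (P i) z.1).eval (z.2.1 i)) / 2))
      (Set.Icc 0 1 ×ˢ Set.univ) :=
  (continuousOn_finsetSum _ fun i _ =>
    (((continuous_eval_ultrasphericalFlow.comp₂ continuous_fst (by fun_prop)).continuousOn).log
      fun z hz => (hpos i z.1 hz.1 _ (coord_sphere_mem_Icc z.2 i)).ne').div_const 2).rexp

theorem hasDerivAt_integral_exp_sum_log_ultrasphericalFlow
    (hP : ∀ i k, P i k ∈ (ultrasphericalOp n).eigenspace (-(ultrasphericalEigenvalue n k : ℝ)))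
    (hpos : ∀ i, ∀ s ∈ Set.Icc (0 : ℝ) 1, ∀ t ∈ Set.Icc (-1 : ℝ) 1,
      0 < (ultrasphericalFlow n (P i) s).eval t) {s : ℝ} (hs : s ∈ Set.Ioo 0 1) :
    HasDerivAt (fun s => ∫ x, Real.exp (∑ i,
        Real.log ((ultrasphericalFlow n (P i) s).eval (x.1 i)) / 2) ∂sphereHaar n)
      (∫ x, Real.exp (∑ i, Real.log ((ultrasphericalFlow n (P i) s).eval (x.1 i)) / 2) *
        ∑ i, -(ultrasphericalOp n (ultrasphericalFlow n (P i) s)).eval (x.1 i) / s /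
          (ultrasphericalFlow n (P i) s).eval (x.1 i) / 2 ∂sphereHaar n) s := by
  have hne {r} (hr : r ∈ Set.Ioo (0 : ℝ) 1) (x : sphere (0 : EuclideanSpace ℝ (Fin (n + 1))) 1)
      (i) : (ultrasphericalFlow n (P i) r).eval (x.1 i) ≠ 0 :=
    (hpos i r (Set.Ioo_subset_Icc_self hr) _ (coord_sphere_mem_Icc x i)).ne'
  have hcont := continuousOn_exp_sum_log_ultrasphericalFlow hpos
  refine hasDerivAt_integral_of_continuousOn_uncurry (μ := sphereHaar n)
    (F := fun s x => Real.exp (∑ i, Real.log ((ultrasphericalFlow n (P i) s).eval (x.1 i)) / 2))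
    (F' := fun s x => Real.exp (∑ i, Real.log ((ultrasphericalFlow n (P i) s).eval (x.1 i)) / 2) *
        ∑ i, -(ultrasphericalOp n (ultrasphericalFlow n (P i) s)).eval (x.1 i) / s /
          (ultrasphericalFlow n (P i) s).eval (x.1 i) / 2)
    (Ioo_mem_nhds hs.1 hs.2) (fun r hr => ?_) ?_ fun r hr x => ?_
  · exact hcont.comp_continuous (f := fun x => (r, x)) (by fun_prop) fun x =>
      ⟨Set.Ioo_subset_Icc_self hr, Set.mem_univ x⟩
  · refine (hcont.mono (Set.prod_mono_left Set.Ioo_subset_Icc_self)).mul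
      (continuousOn_finsetSum _ fun i _ =>
        (((Continuous.continuousOn ?_).div (by fun_prop) ?_).div ?_ ?_).div_const 2)
    · simp only [ultrasphericalOp_ultrasphericalFlow]
      exact (continuous_eval_ultrasphericalFlow.comp₂ continuous_fst (by fun_prop)).neg
    · exact fun z hz => hz.1.1.ne'
    · exact (continuous_eval_ultrasphericalFlow.comp₂ continuous_fst (by fun_prop)).continuousOn
    · exact fun z hz => hne hz.1 z.2 i
  · exact (HasDerivAt.fun_sum fun i _ => ((hasDerivAt_eval_ultrasphericalFlow (hP i) hr.1.ne'
      (x.1 i)).log (hne hr x i)).div_const 2).exp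

theorem antitoneOn_integral_exp_sum_log_ultrasphericalFlow
    (hP : ∀ i k, P i k ∈ (ultrasphericalOp n).eigenspace (-(ultrasphericalEigenvalue n k : ℝ)))
    (hpos : ∀ i, ∀ s ∈ Set.Icc (0 : ℝ) 1, ∀ t ∈ Set.Icc (-1 : ℝ) 1,
      0 < (ultrasphericalFlow n (P i) s).eval t) :
    AntitoneOn (fun s => ∫ x, Real.exp (∑ i,
      Real.log ((ultrasphericalFlow n (P i) s).eval (x.1 i)) / 2) ∂sphereHaar n)
      (Set.Icc 0 1) := by
  have hderiv {s : ℝ} (hs : s ∈ Set.Ioo 0 1) :=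
    hasDerivAt_integral_exp_sum_log_ultrasphericalFlow hP hpos hs
  refine antitoneOn_of_deriv_nonpos (convex_Icc 0 1) ?_ ?_ ?_
  · exact continuousOn_integral_of_compact_support isCompact_univ
      (continuousOn_exp_sum_log_ultrasphericalFlow hpos) fun _ x _ hx => (hx (Set.mem_univ x)).elim
  · rw [interior_Icc]
    exact fun s hs => (hderiv hs).differentiableAt.differentiableWithinAt
  · rw [interior_Icc]
    intro s hs
    rw [(hderiv hs).deriv]
    have hnonneg := integral_sphereHaar_exp_sum_log_mul_sum_nonneg fun i =>
      hpos i s (Set.Ioo_subset_Icc_self hs)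
    rw [← neg_nonneg, ← integral_neg]
    refine (mul_nonneg (inv_nonneg.mpr hs.1.le) hnonneg).trans_eq ?_
    rw [← integral_const_mul]
    congr! 2
    rw [mul_left_comm, ← mul_neg, Finset.mul_sum, ← Finset.sum_neg_distrib]
    congr! 2
    field_simp

end Monotonicity

section UltrasphericalMeasure

open Polynomial

theorem integrable_of_continuousOn_of_ae_mem {X E : Type*} [TopologicalSpace X] [T2Space X]
    [MeasurableSpace X] [OpensMeasurableSpace X] [NormedAddCommGroup E]
    [SecondCountableTopologyEither X E] {μ : Measure X} [IsFiniteMeasureOnCompacts μ] {K : Set X}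
    (hK : IsCompact K) (hμ : ∀ᵐ x ∂μ, x ∈ K) {f : X → E} (hf : ContinuousOn f K) :
    Integrable f μ := by
  rw [← Measure.restrict_eq_self_of_ae_mem hμ]
  exact hf.integrableOn_compact hK

theorem eq_of_forall_integral_eval_eq {μ ν : Measure ℝ} [IsFiniteMeasure μ] [IsFiniteMeasure ν]
    {a b : ℝ} (hμ : ∀ᵐ t ∂μ, t ∈ Set.Icc a b) (hν : ∀ᵐ t ∂ν, t ∈ Set.Icc a b)
    (h : ∀ q : ℝ[X], ∫ t, q.eval t ∂μ = ∫ t, q.eval t ∂ν) : μ = ν := by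
  refine ext_of_forall_integral_eq_of_IsFiniteMeasure fun f => eq_of_forall_dist_le fun ε hε => ?_
  obtain ⟨δ, hδ, hδε⟩ := exists_pos_mul_lt hε (μ.real Set.univ + ν.real Set.univ)
  obtain ⟨q, hq⟩ := exists_polynomial_near_of_continuousOn a b f f.continuous.continuousOn δ hδ
  have hclose (ρ : Measure ℝ) [IsFiniteMeasure ρ] (hρ : ∀ᵐ t ∂ρ, t ∈ Set.Icc a b) :
      dist (∫ t, q.eval t ∂ρ) (∫ t, f t ∂ρ) ≤ δ * ρ.real Set.univ := by
    rw [dist_eq_norm, ← integral_sub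
      (integrable_of_continuousOn_of_ae_mem isCompact_Icc hρ q.continuousOn)
      (integrable_of_continuousOn_of_ae_mem isCompact_Icc hρ f.continuous.continuousOn)]
    exact norm_integral_le_of_norm_le_const (hρ.mono fun t ht => (hq t ht).le)
  calc dist (∫ t, f t ∂μ) (∫ t, f t ∂ν)
      ≤ dist (∫ t, q.eval t ∂μ) (∫ t, f t ∂μ) + dist (∫ t, q.eval t ∂ν) (∫ t, f t ∂ν) := by
        rw [h q]
        exact dist_triangle_left _ _ _
    _ ≤ ε := by linarith [hclose μ hμ, hclose ν hν]

variable {n : ℕ} {μ ν : Measure ℝ} [IsProbabilityMeasure μ] [IsProbabilityMeasure ν]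

theorem ultrasphericalFlow_zero_eq_C_integral (hn : 1 ≤ n)
    (hμ : ∀ᵐ t ∂μ, t ∈ Set.Icc (-1 : ℝ) 1)
    (hL : ∀ p, ∫ t, (ultrasphericalOp n p).eval t ∂μ = 0) {P : ℕ →₀ ℝ[X]}
    (hP : ∀ k, P k ∈ (ultrasphericalOp n).eigenspace (-(ultrasphericalEigenvalue n k : ℝ))) :
    ultrasphericalFlow n P 0 = C (∫ t, (P.sum fun _ p => p).eval t ∂μ) := by
  have hmean (k) (hk : k ≠ 0) : ∫ t, (P k).eval t ∂μ = 0 := by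
    have hLk := hL (P k)
    have hne : (ultrasphericalEigenvalue n k : ℝ) ≠ 0 := Nat.cast_ne_zero.mpr
      ((Nat.zero_le _).trans_lt
        (strictMono_ultrasphericalEigenvalue hn (Nat.pos_of_ne_zero hk))).ne'
    simp only [Module.End.mem_eigenspace_iff.mp (hP k), eval_smul, smul_eq_mul] at hLk
    rw [integral_const_mul] at hLk
    exact (mul_eq_zero.mp hLk).resolve_left (neg_ne_zero.mpr hne)
  obtain ⟨c, hc⟩ := eq_C_of_ultrasphericalOp_eq_zero hn (p := P 0) <| by
    simpa [ultrasphericalEigenvalue] using hP 0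
  have hint : ∀ k ∈ P.support, Integrable (fun t => (P k).eval t) μ := fun k _ =>
    integrable_of_continuousOn_of_ae_mem isCompact_Icc hμ (P k).continuousOn
  have hsum := Finsupp.sum_eq_single 0 (f := P) (g := fun _ p => ∫ t, p.eval t ∂μ)
    (fun k _ hk => hmean k hk) (by simp)
  simp only [Finsupp.sum, eval_finsetSum] at hsum ⊢
  rw [integral_finsetSum _ hint, hsum, ultrasphericalFlow_zero hn, hc]
  simp

theorem eq_of_forall_integral_ultrasphericalOp_eq_zero (hn : 1 ≤ n)
    (hμ : ∀ᵐ t ∂μ, t ∈ Set.Icc (-1 : ℝ) 1) (hν : ∀ᵐ t ∂ν, t ∈ Set.Icc (-1 : ℝ) 1)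
    (hLμ : ∀ p, ∫ t, (ultrasphericalOp n p).eval t ∂μ = 0)
    (hLν : ∀ p, ∫ t, (ultrasphericalOp n p).eval t ∂ν = 0) : μ = ν := by
  refine eq_of_forall_integral_eval_eq hμ hν fun q => ?_
  obtain ⟨P, hP, rfl⟩ := exists_ultrasphericalExpansion hn q
  exact C_injective ((ultrasphericalFlow_zero_eq_C_integral hn hμ hLμ hP).symm.trans
    (ultrasphericalFlow_zero_eq_C_integral hn hν hLν hP))

end UltrasphericalMeasure

section NuMeasure

open ProbabilityTheory

variable {n : ℕ}

theorem Gamma_add_half_div_sqrt_pi_mul_Gamma {a : ℝ} (ha : 0 < a) :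
    Real.Gamma (a + 1 / 2) / (√Real.pi * Real.Gamma a) = 2 ^ (1 - 2 * a) / beta a a := by
  have := Real.Gamma_pos_of_pos ha
  have := Real.Gamma_pos_of_pos (mul_pos two_pos ha)
  rw [beta, ← two_mul, div_div_eq_mul_div, div_eq_div_iff (by positivity) (by positivity)]
  linear_combination Real.Gamma a * Real.Gamma_mul_Gamma_add_half a

/-- The density of `nuMeasure n` as a real-valued function, for comparison with the Beta density
`ProbabilityTheory.betaPDFReal`. -/
noncomputable def nuPDFReal (n : ℕ) (t : ℝ) : ℝ :=
  Real.Gamma (((n : ℝ) + 1) / 2) / (√Real.pi * Real.Gamma ((n : ℝ) / 2)) *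
    Set.indicator (Set.Icc (-1 : ℝ) 1) (fun s => (1 - s ^ 2) ^ ((n : ℝ) / 2 - 1)) t

theorem nuMeasure_eq_withDensity_nuPDFReal (n : ℕ) :
    nuMeasure n = volume.withDensity fun t => ENNReal.ofReal (nuPDFReal n t) := rfl

theorem nuPDFReal_eq_betaPDFReal (hn : 1 ≤ n) {t : ℝ} (ht₁ : t ≠ -1) (ht₂ : t ≠ 1) :
    nuPDFReal n t = 2⁻¹ * betaPDFReal ((n : ℝ) / 2) ((n : ℝ) / 2) (2⁻¹ * (t + 1)) := by
  have hconst := Gamma_add_half_div_sqrt_pi_mul_Gamma (a := (n : ℝ) / 2) (by positivity)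
  rw [← add_div, mul_div_cancel₀ _ two_ne_zero] at hconst
  by_cases ht : t ∈ Set.Icc (-1 : ℝ) 1
  · have hlt₁ : -1 < t := ht.1.lt_of_ne' ht₁
    have hlt₂ : t < 1 := ht.2.lt_of_ne ht₂
    have hprod : (2⁻¹ * (t + 1)) ^ ((n : ℝ) / 2 - 1) * (1 - 2⁻¹ * (t + 1)) ^ ((n : ℝ) / 2 - 1) =
        2 ^ (2 - (n : ℝ)) * (1 - t ^ 2) ^ ((n : ℝ) / 2 - 1) := by
      rw [← Real.mul_rpow (by linarith) (by linarith), show (2 : ℝ) - n = -2 * (n / 2 - 1) by ring,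
        Real.rpow_mul two_pos.le, ← Real.mul_rpow (by positivity) (by nlinarith)]
      norm_num
      ring_nf
    have hpow : (2 : ℝ) ^ (2 - (n : ℝ)) = 2 * 2 ^ (1 - (n : ℝ)) := by
      rw [show (2 : ℝ) - n = 1 - n + 1 by ring, Real.rpow_add_one two_ne_zero, mul_comm]
    rw [nuPDFReal, betaPDFReal, Set.indicator_of_mem ht, if_pos ⟨by linarith, by linarith⟩,
      hconst, mul_assoc (1 / _), hprod, hpow]
    ring
  · rw [nuPDFReal, betaPDFReal, Set.indicator_of_notMem ht, if_neg, mul_zero, mul_zero]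
    exact fun h => ht ⟨by linarith [h.1], by linarith [h.2]⟩

theorem nuPDFReal_nonneg (n : ℕ) (t : ℝ) : 0 ≤ nuPDFReal n t :=
  mul_nonneg (div_nonneg (Real.Gamma_nonneg_of_nonneg (by positivity))
      (mul_nonneg (Real.sqrt_nonneg _) (Real.Gamma_nonneg_of_nonneg (by positivity))))
    (Set.indicator_nonneg (fun s hs => Real.rpow_nonneg (by nlinarith [hs.1, hs.2]) _) _)

theorem measurable_nuPDFReal (n : ℕ) : Measurable (nuPDFReal n) :=
  (Measurable.indicator (by fun_prop) measurableSet_Icc).const_mul _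

theorem lintegral_nuPDFReal (hn : 1 ≤ n) : ∫⁻ t, ENNReal.ofReal (nuPDFReal n t) = 1 := by
  have hbeta : (fun t => ENNReal.ofReal (nuPDFReal n t)) =ᵐ[volume] fun t =>
      ENNReal.ofReal 2⁻¹ * betaPDF ((n : ℝ) / 2) ((n : ℝ) / 2) (2⁻¹ * (t + 1)) := by
    filter_upwards [Measure.ae_ne volume (-1), Measure.ae_ne volume 1] with t ht₁ ht₂
    rw [nuPDFReal_eq_betaPDFReal hn ht₁ ht₂, ENNReal.ofReal_mul (by norm_num), betaPDF]
  have hmeas : Measurable (betaPDF ((n : ℝ) / 2) ((n : ℝ) / 2)) :=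
    (measurable_betaPDFReal _ _).ennreal_ofReal
  rw [lintegral_congr_ae hbeta, lintegral_const_mul _ (by fun_prop),
    lintegral_add_right_eq_self (fun t => betaPDF ((n : ℝ) / 2) ((n : ℝ) / 2) (2⁻¹ * t)) 1,
    ← lintegral_map (g := fun t : ℝ => 2⁻¹ * t) hmeas (by fun_prop),
    Real.map_volume_mul_left (by norm_num), lintegral_smul_measure,
    lintegral_betaPDF_eq_one (by positivity) (by positivity), smul_eq_mul, mul_one,
    ← ENNReal.ofReal_mul (by norm_num)]
  norm_num

theorem isProbabilityMeasure_nuMeasure (hn : 1 ≤ n) : IsProbabilityMeasure (nuMeasure n) := by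
  refine ⟨?_⟩
  rw [nuMeasure_eq_withDensity_nuPDFReal, withDensity_apply _ MeasurableSet.univ,
    setLIntegral_univ, lintegral_nuPDFReal hn]

theorem ae_nuMeasure_mem_Icc (n : ℕ) : ∀ᵐ t ∂nuMeasure n, t ∈ Set.Icc (-1 : ℝ) 1 := by
  rw [nuMeasure_eq_withDensity_nuPDFReal,
    ae_withDensity_iff (measurable_nuPDFReal n).ennreal_ofReal]
  refine .of_forall fun t ht => ?_
  by_contra hmem
  simp [nuPDFReal, Set.indicator_of_notMem hmem] at ht

theorem intervalIntegrable_one_sub_sq_rpow (hn : 1 ≤ n) :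
    IntervalIntegrable (fun t : ℝ => (1 - t ^ 2) ^ ((n : ℝ) / 2 - 1)) volume (-1) 1 := by
  have hint : Integrable (nuPDFReal n) := by
    refine ⟨(measurable_nuPDFReal n).aestronglyMeasurable, ?_⟩
    rw [hasFiniteIntegral_iff_ofReal (.of_forall (nuPDFReal_nonneg n)), lintegral_nuPDFReal hn]
    exact ENNReal.one_lt_top
  have := Real.Gamma_pos_of_pos (show 0 < ((n : ℝ) + 1) / 2 by positivity)
  have := Real.Gamma_pos_of_pos (show 0 < (n : ℝ) / 2 by positivity)
  have hconst : IsUnit (Real.Gamma (((n : ℝ) + 1) / 2) / (√Real.pi * Real.Gamma ((n : ℝ) / 2))) :=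
    isUnit_iff_ne_zero.mpr (by positivity)
  rw [intervalIntegrable_iff_integrableOn_Icc_of_le (by norm_num),
    ← integrable_indicator_iff measurableSet_Icc]
  exact (integrable_const_mul_iff hconst _).mp hint

theorem integral_nuMeasure (n : ℕ) (g : ℝ → ℝ) : ∫ t, g t ∂nuMeasure n =
    Real.Gamma (((n : ℝ) + 1) / 2) / (√Real.pi * Real.Gamma ((n : ℝ) / 2)) *
      ∫ t in (-1)..1, (1 - t ^ 2) ^ ((n : ℝ) / 2 - 1) * g t := by
  rw [nuMeasure_eq_withDensity_nuPDFReal, integral_withDensity_eq_integral_toReal_smul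
    (measurable_nuPDFReal n).ennreal_ofReal (.of_forall fun _ => ENNReal.ofReal_lt_top),
    intervalIntegral.integral_of_le (by norm_num), ← integral_Icc_eq_integral_Ioc,
    ← integral_indicator measurableSet_Icc, ← integral_const_mul]
  refine integral_congr_ae (.of_forall fun t => ?_)
  simp only [ENNReal.toReal_ofReal (nuPDFReal_nonneg n t)]
  rw [nuPDFReal, smul_eq_mul, Set.indicator_mul_left, mul_assoc]

open Polynomial in
theorem integral_nuMeasure_eval_ultrasphericalOp (hn : 1 ≤ n) (p : ℝ[X]) :
    ∫ t, (ultrasphericalOp n p).eval t ∂nuMeasure n = 0 := by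
  have hn' : (n : ℝ) / 2 ≠ 0 := by positivity
  have hderiv : ∀ t ∈ Set.Ioo (-1 : ℝ) 1, HasDerivAt
      (fun t => (1 - t ^ 2) ^ ((n : ℝ) / 2) * p.derivative.eval t)
      ((1 - t ^ 2) ^ ((n : ℝ) / 2 - 1) * (ultrasphericalOp n p).eval t) t := fun t ht => by
    have hpos : 0 < 1 - t ^ 2 := by nlinarith [ht.1, ht.2]
    have hsq : HasDerivAt (fun t : ℝ => 1 - t ^ 2) (-(2 * t)) t := by
      simpa using (hasDerivAt_pow 2 t).const_sub 1
    refine ((hsq.rpow_const (.inl hpos.ne')).mul (p.derivative.hasDerivAt t)).congr_deriv ?_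
    rw [eval_ultrasphericalOp, ← sub_add_cancel ((n : ℝ) / 2) 1, Real.rpow_add_one hpos.ne']
    ring_nf
  have hcont : Continuous fun t : ℝ => (1 - t ^ 2) ^ ((n : ℝ) / 2) * p.derivative.eval t :=
    (Continuous.rpow_const (by fun_prop) fun _ => .inr (by positivity)).mul p.derivative.continuous
  rw [integral_nuMeasure, intervalIntegral.integral_eq_sub_of_hasDerivAt_of_le (by norm_num)
    hcont.continuousOn hderiv ((intervalIntegrable_one_sub_sq_rpow hn).mul_continuousOn
      (ultrasphericalOp n p).continuousOn)]
  norm_num [Real.zero_rpow hn']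

open Polynomial in
theorem integral_sphereHaar_eval_ultrasphericalOp (p : ℝ[X]) (i : Fin (n + 1)) :
    ∫ x, (ultrasphericalOp n p).eval (x.1 i) ∂sphereHaar n = 0 := by
  let proj : EuclideanSpace ℝ (Fin (n + 1)) →L[ℝ] ℝ := EuclideanSpace.proj i
  have hderiv : ∀ x ∈ sphere (0 : EuclideanSpace ℝ (Fin (n + 1))) 1, HasFDerivAt
      (fun x => p.derivative.eval (proj x)) (p.derivative.derivative.eval (proj x) • proj) x :=
    fun x _ => (p.derivative.hasDerivAt (proj x)).comp_hasFDerivAt x proj.hasFDerivAt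
  rw [← integral_sphereHaar_fderiv_single_sub_mul hderiv (by fun_prop) i]
  congr! 2 with x
  rw [eval_ultrasphericalOp]
  simp only [PiLp.proj_apply, smul_apply, PiLp.single_eq_same, smul_eq_mul, mul_one, proj]
  ring

theorem measurePreserving_coord_sphereHaar_nuMeasure (hn : 1 ≤ n) (i : Fin (n + 1)) :
    MeasurePreserving (fun x : sphere (0 : EuclideanSpace ℝ (Fin (n + 1))) 1 => x.1 i)
      (sphereHaar n) (nuMeasure n) := by
  have hmeas : Measurable fun x : sphere (0 : EuclideanSpace ℝ (Fin (n + 1))) 1 => x.1 i := by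
    fun_prop
  have := isProbabilityMeasure_nuMeasure hn
  have := Measure.isProbabilityMeasure_map (μ := sphereHaar n) hmeas.aemeasurable
  refine ⟨hmeas, eq_of_forall_integral_ultrasphericalOp_eq_zero hn ?_ (ae_nuMeasure_mem_Icc n)
    (fun p => ?_) (integral_nuMeasure_eval_ultrasphericalOp hn)⟩
  · exact (ae_map_iff hmeas.aemeasurable measurableSet_Icc).mpr
      (.of_forall fun x => coord_sphere_mem_Icc x i)
  · rw [integral_map hmeas.aemeasurable (ultrasphericalOp n p).continuous.aestronglyMeasurable]
    exact integral_sphereHaar_eval_ultrasphericalOp p i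

end NuMeasure

section PolynomialCase

open Polynomial

variable {n : ℕ} {p : Fin (n + 1) → ℝ[X]}

theorem exp_sum_log_div_two {ι : Type*} {s : Finset ι} {u : ι → ℝ} (hu : ∀ i ∈ s, 0 < u i) :
    Real.exp (∑ i ∈ s, Real.log (u i) / 2) = ∏ i ∈ s, √(u i) := by
  rw [Real.exp_sum]
  refine Finset.prod_congr rfl fun i hi => ?_
  rw [← Real.log_sqrt (hu i hi).le, Real.exp_log (Real.sqrt_pos.mpr (hu i hi))]

theorem integral_sphereHaar_prod_sqrt_eval_le (hn : 1 ≤ n)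
    (hp : ∀ i, ∀ t ∈ Set.Icc (-1 : ℝ) 1, 0 < (p i).eval t) :
    ∫ x, ∏ i, √((p i).eval (x.1 i)) ∂sphereHaar n ≤ ∏ i, √(∫ t, (p i).eval t ∂nuMeasure n) := by
  have := isProbabilityMeasure_nuMeasure hn
  choose P hP hsum using fun i => exists_ultrasphericalExpansion hn (p i)
  have hpos (i) : ∀ s ∈ Set.Icc (0 : ℝ) 1, ∀ t ∈ Set.Icc (-1 : ℝ) 1,
      0 < (ultrasphericalFlow n (P i) s).eval t := fun s hs t ht =>
    eval_ultrasphericalFlow_pos (hP i) (by rw [hsum i]; exact hp i) hs ht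
  have hanti := antitoneOn_integral_exp_sum_log_ultrasphericalFlow hP hpos
    (Set.left_mem_Icc.mpr zero_le_one) (Set.right_mem_Icc.mpr zero_le_one) zero_le_one
  have hzero (i) : ultrasphericalFlow n (P i) 0 = C (∫ t, (p i).eval t ∂nuMeasure n) := by
    rw [← hsum i]
    exact ultrasphericalFlow_zero_eq_C_integral hn (ae_nuMeasure_mem_Icc n)
      (integral_nuMeasure_eval_ultrasphericalOp hn) (hP i)
  have hmean (i) : 0 < ∫ t, (p i).eval t ∂nuMeasure n := by
    simpa [hzero] using hpos i 0 (by simp) 0 (by simp)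
  simpa [ultrasphericalFlow_one, hsum, hzero, exp_sum_log_div_two fun i _ => hmean i,
    exp_sum_log_div_two fun i _ => hp i _ (coord_sphere_mem_Icc _ i)] using hanti

theorem lintegral_sphereHaar_prod_enorm_eval_le (hn : 1 ≤ n)
    (hp : ∀ i, ∀ t ∈ Set.Icc (-1 : ℝ) 1, 0 < (p i).eval t) :
    ∫⁻ x, ∏ i, ‖(p i).eval (x.1 i)‖ₑ ∂sphereHaar n ≤
      ∏ i, eLpNorm (fun t => (p i).eval t) 2 (nuMeasure n) := by
  have := isProbabilityMeasure_nuMeasure hn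
  have hsqrt (x : sphere (0 : EuclideanSpace ℝ (Fin (n + 1))) 1) (i) :
      √((p i ^ 2).eval (x.1 i)) = (p i).eval (x.1 i) := by
    rw [eval_pow, Real.sqrt_sq (hp i _ (coord_sphere_mem_Icc x i)).le]
  have hcont : Continuous fun x : sphere (0 : EuclideanSpace ℝ (Fin (n + 1))) 1 =>
      ∏ i, (p i).eval (x.1 i) := by fun_prop
  have hnonneg (x : sphere (0 : EuclideanSpace ℝ (Fin (n + 1))) 1) :
      0 ≤ ∏ i, (p i).eval (x.1 i) :=
    Finset.prod_nonneg fun i _ => (hp i _ (coord_sphere_mem_Icc x i)).le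
  have hnorm (i) : eLpNorm (fun t => (p i).eval t) 2 (nuMeasure n) =
      ENNReal.ofReal √(∫ t, (p i ^ 2).eval t ∂nuMeasure n) := by
    have hLp : MemLp (fun t => (p i).eval t) 2 (nuMeasure n) :=
      (memLp_two_iff_integrable_sq (p i).continuous.aestronglyMeasurable).mpr
        (integrable_of_continuousOn_of_ae_mem isCompact_Icc (ae_nuMeasure_mem_Icc n) (by fun_prop))
    rw [hLp.eLpNorm_eq_integral_rpow_norm (by simp) (by simp), Real.sqrt_eq_rpow]
    simp
  calc ∫⁻ x, ∏ i, ‖(p i).eval (x.1 i)‖ₑ ∂sphereHaar n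
      = ENNReal.ofReal (∫ x, ∏ i, √((p i ^ 2).eval (x.1 i)) ∂sphereHaar n) := by
        simp only [hsqrt]
        rw [ofReal_integral_eq_lintegral_ofReal
          (integrable_of_continuous_of_compactSpace hcont) (.of_forall hnonneg)]
        simp only [ENNReal.ofReal_prod_of_nonneg fun i _ => (hp i _ (coord_sphere_mem_Icc _ i)).le,
          ← Real.enorm_of_nonneg (hp _ _ (coord_sphere_mem_Icc _ _)).le]
    _ ≤ ENNReal.ofReal (∏ i, √(∫ t, (p i ^ 2).eval t ∂nuMeasure n)) :=
        ENNReal.ofReal_le_ofReal <| integral_sphereHaar_prod_sqrt_eval_le hn fun i t ht => by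
          simpa using pow_pos (hp i t ht) 2
    _ = ∏ i, eLpNorm (fun t => (p i).eval t) 2 (nuMeasure n) := by
        simp only [hnorm]
        exact ENNReal.ofReal_prod_of_nonneg fun i _ => Real.sqrt_nonneg _

end PolynomialCase

section Approximation

open Polynomial Filter Topology

theorem exists_polynomial_pos_near_abs_of_continuousOn {a b : ℝ} {g : ℝ → ℝ}
    (hg : ContinuousOn g (Set.Icc a b)) {ε : ℝ} (hε : 0 < ε) :
    ∃ p : ℝ[X], ∀ t ∈ Set.Icc a b, 0 < p.eval t ∧ ‖p.eval t - |g t|‖ ≤ ε := by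
  obtain ⟨p, hp⟩ := exists_polynomial_near_of_continuousOn a b (fun t => |g t| + ε / 2)
    (by fun_prop) (ε / 2) (half_pos hε)
  refine ⟨p, fun t ht => ?_⟩
  obtain ⟨hlow, hupp⟩ := abs_lt.mp (hp t ht)
  have := abs_nonneg (g t)
  exact ⟨by linarith, abs_le.mpr ⟨by linarith, by linarith⟩⟩

variable {μ : Measure ℝ} [IsFiniteMeasure μ] {a b : ℝ} {g : ℝ → ℝ} {r : ℝ≥0∞}

theorem exists_polynomial_pos_eLpNorm_sub_abs_le (hμ : ∀ᵐ t ∂μ, t ∈ Set.Icc a b) (hr₁ : 1 ≤ r)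
    (hr : r ≠ ⊤) (hg : MemLp g r μ) {ε : ℝ≥0∞} (hε : ε ≠ 0) :
    ∃ p : ℝ[X], (∀ t ∈ Set.Icc a b, 0 < p.eval t) ∧
      eLpNorm (fun t => p.eval t - |g t|) r μ ≤ ε := by
  have hε' : ε / 2 ≠ 0 := (ENNReal.half_pos hε).ne'
  obtain ⟨h, hh, -⟩ := hg.exists_boundedContinuous_eLpNorm_sub_le hr hε'
  obtain ⟨δ, hδ, hδε⟩ := ENNReal.exists_nnreal_pos_mul_lt
    (ENNReal.rpow_ne_top_of_nonneg (inv_nonneg.mpr r.toReal_nonneg) (measure_ne_top μ Set.univ)) hε'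
  obtain ⟨p, hp⟩ := exists_polynomial_pos_near_abs_of_continuousOn (a := a) (b := b)
    h.continuous.continuousOn (NNReal.coe_pos.mpr hδ)
  refine ⟨p, fun t ht => (hp t ht).1, ?_⟩
  have hpoly : eLpNorm (fun t => p.eval t - |h t|) r μ ≤ ε / 2 := by
    refine (eLpNorm_le_of_ae_bound (hμ.mono fun t ht => (hp t ht).2)).trans ?_
    rw [mul_comm, ENNReal.ofReal_coe_nnreal]
    exact hδε.le
  have habs : eLpNorm (fun t => |h t| - |g t|) r μ ≤ ε / 2 := by
    refine (eLpNorm_mono fun t => ?_).trans hh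
    rw [Pi.sub_apply, norm_sub_rev (g t)]
    exact abs_abs_sub_abs_le_abs_sub (h t) (g t)
  calc eLpNorm (fun t => p.eval t - |g t|) r μ
      = eLpNorm ((fun t => p.eval t - |h t|) + fun t => |h t| - |g t|) r μ := by
        congr 1
        ext t
        simp
    _ ≤ eLpNorm (fun t => p.eval t - |h t|) r μ + eLpNorm (fun t => |h t| - |g t|) r μ :=
        eLpNorm_add_le (by fun_prop)
          (h.continuous.abs.aestronglyMeasurable.sub hg.aestronglyMeasurable.norm) hr₁
    _ ≤ ε := (add_le_add hpoly habs).trans_eq (ENNReal.add_halves ε)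

theorem exists_seq_polynomial_pos_tendsto_abs (hμ : ∀ᵐ t ∂μ, t ∈ Set.Icc a b) (hr₁ : 1 ≤ r)
    (hr : r ≠ ⊤) (hg : MemLp g r μ) :
    ∃ p : ℕ → ℝ[X], (∀ m, ∀ t ∈ Set.Icc a b, 0 < (p m).eval t) ∧
      Tendsto (fun m => eLpNorm (fun t => (p m).eval t - |g t|) r μ) atTop (𝓝 0) ∧
      ∀ᵐ t ∂μ, Tendsto (fun m => (p m).eval t) atTop (𝓝 |g t|) := by
  choose p hpos hle using fun m : ℕ => exists_polynomial_pos_eLpNorm_sub_abs_le hμ hr₁ hr hg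
    (ENNReal.inv_ne_zero.mpr (ENNReal.natCast_ne_top m))
  have hlim : Tendsto (fun m => eLpNorm (fun t => (p m).eval t - |g t|) r μ) atTop (𝓝 0) :=
    tendsto_of_tendsto_of_tendsto_of_le_of_le tendsto_const_nhds
      ENNReal.tendsto_inv_nat_nhds_zero (fun _ => zero_le) hle
  obtain ⟨φ, hφ, hae⟩ := (tendstoInMeasure_of_tendsto_eLpNorm (zero_lt_one.trans_le hr₁).ne'
    (fun m => (p m).continuous.aestronglyMeasurable)
    hg.aestronglyMeasurable.norm hlim).exists_seq_tendsto_ae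
  exact ⟨fun m => p (φ m), fun m => hpos _, hlim.comp hφ.tendsto_atTop, hae⟩

end Approximation

section BrascampLieb

open Filter Topology

variable {n : ℕ} {g : Fin (n + 1) → ℝ → ℝ}

theorem lintegral_sphereHaar_prod_enorm_le_of_memLp (hn : 1 ≤ n)
    (hg : ∀ i, MemLp (g i) 2 (nuMeasure n)) :
    ∫⁻ x, ∏ i, ‖g i (x.1 i)‖ₑ ∂sphereHaar n ≤ ∏ i, eLpNorm (g i) 2 (nuMeasure n) := by
  have := isProbabilityMeasure_nuMeasure hn
  choose p hpos hL2 hae using fun i =>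
    exists_seq_polynomial_pos_tendsto_abs (ae_nuMeasure_mem_Icc n) one_le_two
      ENNReal.ofNat_ne_top (hg i)
  have hlim : ∀ᵐ x ∂sphereHaar n, Tendsto (fun m => ∏ i, ‖(p i m).eval (x.1 i)‖ₑ) atTop
      (𝓝 (∏ i, ‖g i (x.1 i)‖ₑ)) := by
    filter_upwards [ae_all_iff.mpr fun i =>
      (measurePreserving_coord_sphereHaar_nuMeasure hn i).quasiMeasurePreserving.ae (hae i)]
      with x hx
    refine ENNReal.tendsto_finsetProd_of_ne_top _ (fun i _ => ?_) fun i _ => enorm_ne_top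
    simpa using (hx i).enorm
  have hnorm : Tendsto (fun m => ∏ i, (eLpNorm (fun t => (p i m).eval t - |g i t|) 2 (nuMeasure n) +
      eLpNorm (g i) 2 (nuMeasure n))) atTop (𝓝 (∏ i, eLpNorm (g i) 2 (nuMeasure n))) := by
    refine ENNReal.tendsto_finsetProd_of_ne_top _ (fun i _ => ?_) fun i _ => (hg i).eLpNorm_ne_top
    simpa using (hL2 i).add_const (eLpNorm (g i) 2 (nuMeasure n))
  have htri (i m) : eLpNorm (fun t => (p i m).eval t) 2 (nuMeasure n) ≤
      eLpNorm (fun t => (p i m).eval t - |g i t|) 2 (nuMeasure n) +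
        eLpNorm (g i) 2 (nuMeasure n) := by
    rw [← eLpNorm_norm (g i)]
    refine le_of_eq_of_le (congrArg (eLpNorm · 2 _) ?_) (eLpNorm_add_le
      ((p i m).continuous.aestronglyMeasurable.sub (hg i).aestronglyMeasurable.norm)
      (hg i).aestronglyMeasurable.norm one_le_two)
    ext t
    simp
  calc ∫⁻ x, ∏ i, ‖g i (x.1 i)‖ₑ ∂sphereHaar n
      = ∫⁻ x, liminf (fun m => ∏ i, ‖(p i m).eval (x.1 i)‖ₑ) atTop ∂sphereHaar n :=
        lintegral_congr_ae (hlim.mono fun x hx => hx.liminf_eq.symm)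
    _ ≤ liminf (fun m => ∫⁻ x, ∏ i, ‖(p i m).eval (x.1 i)‖ₑ ∂sphereHaar n) atTop :=
        lintegral_liminf_le fun m => Finset.measurable_fun_prod _ fun i _ =>
          (Continuous.measurable (by fun_prop)).enorm
    _ ≤ liminf (fun m => ∏ i, (eLpNorm (fun t => (p i m).eval t - |g i t|) 2 (nuMeasure n) +
          eLpNorm (g i) 2 (nuMeasure n))) atTop :=
        liminf_le_liminf <| .of_forall fun m =>
          (lintegral_sphereHaar_prod_enorm_eval_le hn fun i => hpos i m).trans
            (Finset.prod_le_prod' fun i _ => htri i m)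
    _ = ∏ i, eLpNorm (g i) 2 (nuMeasure n) := hnorm.liminf_eq

theorem lintegral_sphereHaar_prod_enorm_le (hn : 1 ≤ n)
    (hg : ∀ i, AEStronglyMeasurable (g i) (nuMeasure n)) :
    ∫⁻ x, ∏ i, ‖g i (x.1 i)‖ₑ ∂sphereHaar n ≤ ∏ i, eLpNorm (g i) 2 (nuMeasure n) := by
  by_cases htop : ∀ i, eLpNorm (g i) 2 (nuMeasure n) ≠ ⊤
  · exact lintegral_sphereHaar_prod_enorm_le_of_memLp hn fun i => ⟨hg i, (htop i).lt_top⟩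
  by_cases hzero : ∃ i, eLpNorm (g i) 2 (nuMeasure n) = 0
  · obtain ⟨i, hi⟩ := hzero
    have hae := (measurePreserving_coord_sphereHaar_nuMeasure hn i).quasiMeasurePreserving.ae
      ((eLpNorm_eq_zero_iff (hg i) two_ne_zero).mp hi)
    refine (lintegral_eq_zero_of_ae_eq_zero (hae.mono fun x hx => ?_)).trans_le zero_le
    exact Finset.prod_eq_zero (Finset.mem_univ i) (by simpa using hx)
  · push Not at htop hzero
    obtain ⟨i, hi⟩ := htop
    rw [← Finset.mul_prod_erase _ _ (Finset.mem_univ i), hi,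
      ENNReal.top_mul (Finset.prod_ne_zero_iff.mpr fun j _ => hzero j)]
    exact le_top

theorem eLpNorm_exp_two {α : Type*} [MeasurableSpace α] (μ : Measure α) (f : α → ℝ) :
    eLpNorm (fun a => Real.exp (f a)) 2 μ =
      (∫⁻ a, ENNReal.ofReal (Real.exp (2 * f a)) ∂μ) ^ ((1 : ℝ) / 2) := by
  rw [eLpNorm_eq_lintegral_rpow_enorm_toReal two_ne_zero ENNReal.ofNat_ne_top,
    ENNReal.toReal_ofNat]
  congr! 3 with a
  rw [Real.enorm_of_nonneg (Real.exp_nonneg _),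
    ENNReal.ofReal_rpow_of_nonneg (Real.exp_nonneg _) two_pos.le, ← Real.exp_mul, mul_comm]

theorem brascamp_lieb_sphere_exp_general (hn : 1 ≤ n) {f : Fin (n + 1) → ℝ → ℝ}
    (hf : ∀ i, AEMeasurable (f i) (nuMeasure n)) :
    ∫⁻ x, ENNReal.ofReal (Real.exp (∑ i, f i (x.1 i))) ∂sphereHaar n ≤
      ∏ i, (∫⁻ t in Set.Icc (-1 : ℝ) 1,
        ENNReal.ofReal (Real.exp (2 * f i t)) ∂nuMeasure n) ^ ((1 : ℝ) / 2) := by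
  rw [Measure.restrict_eq_self_of_ae_mem (ae_nuMeasure_mem_Icc n)]
  simpa only [eLpNorm_exp_two, Real.enorm_of_nonneg (Real.exp_nonneg _), Real.exp_sum,
    ENNReal.ofReal_prod_of_nonneg fun _ _ => Real.exp_nonneg _] using
    lintegral_sphereHaar_prod_enorm_le hn fun i => (hf i).exp.aestronglyMeasurable

end BrascampLieb

/-- **Brascamp–Lieb inequality on the sphere, exponential form**: for measurable
functions `f_i : [-1,1] → ℝ` bounded from below and `f(x) = ∑ f_i(x_i)`,
`∫_{S^n} e^f dσ_n ≤ ∏_i (∫_{[-1,1]} e^{2 f_i} dν_n)^{1/2}`. -/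
theorem brascamp_lieb_sphere_exp (n : ℕ) (hn : 1 ≤ n)
    (f : Fin (n + 1) → ℝ → ℝ) (hmeas : ∀ i, Measurable (f i))
    (hbdd : ∀ i, ∃ C : ℝ, ∀ t ∈ Set.Icc (-1 : ℝ) 1, C ≤ f i t) :
    ∫⁻ x : sphere (0 : EuclideanSpace ℝ (Fin (n + 1))) 1,
        ENNReal.ofReal
          (Real.exp (∑ i, f i ((x : EuclideanSpace ℝ (Fin (n + 1))) i))) ∂(sphereHaar n) ≤
      ∏ i, (∫⁻ t in Set.Icc (-1 : ℝ) 1,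
          ENNReal.ofReal (Real.exp (2 * f i t)) ∂(nuMeasure n)) ^ ((1 : ℝ) / 2) :=
  brascamp_lieb_sphere_exp_general hn fun i => (hmeas i).aemeasurable
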